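/- Under the identification M₆ ≅ M₂ ⊗ M₃, consider the unital *-subalgebras M₂ ⊗ ℂ1₃ ⊆ M₆ and ℂ1₂ ⊗ M₃ ⊆ M₆. Then D(M₆ ‖ M₂ ⊗ ℂ1₃) = log 6, D(M₆ ‖ ℂ1₂ ⊗ M₃) = log 4, while D(M₆ ⊗ M₆ ‖ (M₂ ⊗ ℂ1₃) ⊗ (ℂ1₂ ⊗ M₃)) = log 36. In particular the superadditivity D(M₁ ⊗ M₂‖N₁ ⊗ N₂) ≥ D(M₁‖N₁) + D(M₂‖N₂) can be strict. -/

import Mathlib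

open scoped ENNReal Classical ComplexOrder
open Matrix

noncomputable section

namespace GJL

variable {n : Type*} [Fintype n] [DecidableEq n]

/-- `Mat n` is the matrix *-algebra with rows and columns indexed by `n`. -/
abbrev Mat (n : Type*) [Fintype n] [DecidableEq n] := Matrix n n ℂ

/-- A density matrix: positive semidefinite with trace one. -/
def IsDensity (ρ : Mat n) : Prop := ρ.PosSemidef ∧ ρ.trace = 1

/-- The real part of the (matrix) trace. -/
def traceR (A : Mat n) : ℝ := (A.trace).re

/-- Real matrix powers via the continuous functional calculus.  For positive
semidefinite matrices and negative exponents this is the generalized inverse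
power on the support, since `(0 : ℝ) ^ r = 0` for `r ≠ 0`. -/
def mpow (A : Mat n) (r : ℝ) : Mat n := cfc (fun x : ℝ => x ^ r) A

/-- Matrix logarithm on the support (`Real.log 0 = 0`). -/
def mlog (A : Mat n) : Mat n := cfc Real.log A

/-- Schatten `p`-norm `(Tr ((x* x)^(p/2)))^(1/p)`. -/
def snorm (p : ℝ) (x : Mat n) : ℝ := (traceR (mpow (xᴴ * x) (p/2))) ^ (1/p)

/-- Operator norm `‖x‖_∞`. -/
def opNorm (x : Mat n) : ℝ := ‖(Matrix.toEuclideanCLM (𝕜 := ℂ) x : EuclideanSpace ℂ n →L[ℂ] EuclideanSpace ℂ n)‖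

/-- The support projection of `ρ` is dominated by that of `σ` (for positive
semidefinite matrices: `ker σ ⊆ ker ρ`). -/
def suppLe (ρ σ : Mat n) : Prop := ∀ v, σ.mulVec v = 0 → ρ.mulVec v = 0

/-- `e` is the support projection of `ρ`. -/
def IsSupportProj (ρ e : Mat n) : Prop :=
  e.IsHermitian ∧ e * e = e ∧ ∀ v, e.mulVec v = 0 ↔ ρ.mulVec v = 0

/-- `D_∞(ρ‖σ) = log min {λ ≥ 0 | ρ ≤ λ σ}`, `⊤` if no such `λ` exists. -/
def Dinf (ρ σ : Mat n) : EReal :=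
  if ∃ c : ℝ, 0 ≤ c ∧ (c • σ - ρ).PosSemidef then
    ((Real.log (sInf {c : ℝ | 0 ≤ c ∧ (c • σ - ρ).PosSemidef}) : ℝ) : EReal)
  else ⊤

/-- Umegaki relative entropy `D(ρ‖σ) = Tr(ρ log ρ - ρ log σ)`, `⊤` if the
support condition fails. -/
def DU (ρ σ : Mat n) : EReal :=
  if suppLe ρ σ then ((traceR (ρ * mlog ρ - ρ * mlog σ) : ℝ) : EReal) else ⊤

/-- The sandwiched matrix `σ^{(1-p)/(2p)} ρ σ^{(1-p)/(2p)}`; note that for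
`p > 1` the exponent `(1-p)/(2p)` equals `-1/(2p')` with `1/p + 1/p' = 1`. -/
def sandwich (p : ℝ) (ρ σ : Mat n) : Mat n :=
  mpow σ ((1 - p)/(2*p)) * ρ * mpow σ ((1 - p)/(2*p))

/-- The sandwiched Rényi relative entropy `D_p(ρ‖σ)` for `p ∈ [1/2, ∞]`:
for `p ∈ (1,∞)` it is `p' log ‖σ^{-1/(2p')} ρ σ^{-1/(2p')}‖_p
= (p-1)⁻¹ log Tr ((σ^{-1/(2p')} ρ σ^{-1/(2p')})^p)` when the support of `ρ` is
dominated by that of `σ` and `⊤` otherwise; for `p ∈ [1/2, 1)` it is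
`(p-1)⁻¹ log Tr ((σ^{(1-p)/(2p)} ρ σ^{(1-p)/(2p)})^p)` (`⊤` when the trace
vanishes, i.e. when the honest value is `+∞`); `D_1` is the Umegaki relative
entropy and `D_∞` the max-relative entropy. -/
def Dp (p : ℝ≥0∞) (ρ σ : Mat n) : EReal :=
  if p = ⊤ then Dinf ρ σ
  else if p = 1 then DU ρ σ
  else if 1 < p.toReal ∧ ¬ suppLe ρ σ then ⊤
  else if traceR (mpow (sandwich p.toReal ρ σ) p.toReal) = 0 then ⊤
  else (((p.toReal - 1)⁻¹ * Real.log (traceR (mpow (sandwich p.toReal ρ σ) p.toReal)) : ℝ) : EReal)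

/-- `D_p(ρ‖S) = inf { D_p(ρ‖σ) | σ a density in S }`. -/
def DpSet (p : ℝ≥0∞) (ρ : Mat n) (S : Set (Mat n)) : EReal :=
  ⨅ σ ∈ {σ ∈ S | IsDensity σ}, Dp p ρ σ

/-- `D_p(A‖S) = sup { D_p(ρ‖S) | ρ a density in A }`. -/
def DpRel (p : ℝ≥0∞) (A S : Set (Mat n)) : EReal :=
  ⨆ ρ ∈ {ρ ∈ A | IsDensity ρ}, DpSet p ρ S

open scoped Kronecker in
/-- The algebraic tensor product `N₁ ⊗ N₂ ⊆ M_{n₁} ⊗ M_{n₂} = M_{n₁ × n₂}`,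
realized as the linear span of Kronecker products. -/
def tensorSpan {n₁ n₂ : Type*} [Fintype n₁] [DecidableEq n₁] [Fintype n₂] [DecidableEq n₂]
    (N₁ : Set (Mat n₁)) (N₂ : Set (Mat n₂)) : Set (Mat (n₁ × n₂)) :=
  ↑(Submodule.span ℂ {z : Mat (n₁ × n₂) | ∃ x ∈ N₁, ∃ y ∈ N₂, z = x ⊗ₖ y})

/-- `D_{p,cb}(M‖N) = sup_k D_p(M_k ⊗ M ‖ M_k ⊗ N)`. -/
def DpCb (p : ℝ≥0∞) (N : Set (Mat n)) : EReal :=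
  ⨆ k : ℕ, DpRel p Set.univ (tensorSpan (Set.univ : Set (Mat (Fin k))) N)

/-- `E` is the trace preserving conditional expectation onto `N`, i.e. the
orthogonal projection onto `N` with respect to the Hilbert–Schmidt inner
product `⟨x,y⟩ = Tr(x* y)`. -/
def IsCondExp (N : Set (Mat n)) (E : Mat n →ₗ[ℂ] Mat n) : Prop :=
  (∀ x, E x ∈ N) ∧ (∀ x ∈ N, E x = x) ∧
    ∀ x y, y ∈ N → ((E x)ᴴ * y).trace = (xᴴ * y).trace

/-- The Pimsner–Popa index constant
`λ(M:N) = max {c ≥ 0 | c x ≤ E(x) for all x ≥ 0}`. -/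
def ppIndex (E : Mat n →ₗ[ℂ] Mat n) : ℝ :=
  sSup {c : ℝ | 0 ≤ c ∧ ∀ x : Mat n, x.PosSemidef → (E x - c • x).PosSemidef}

/-- von Neumann entropy `H(ρ) = -Tr(ρ log ρ)`. -/
def vnEntropy (ρ : Mat n) : ℝ := - traceR (ρ * mlog ρ)

/-- The amplification `id_{M_k} ⊗ Φ` acting on `M_k ⊗ M_n = M_{k × n}`,
applying `Φ` blockwise. -/
def ampFun (k : Type*) [Fintype k] [DecidableEq k] (Φ : Mat n →ₗ[ℂ] Mat n)
    (X : Mat (k × n)) : Mat (k × n) :=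
  Matrix.of fun a b => Φ (Matrix.of fun s t => X (a.1, s) (b.1, t)) a.2 b.2

/-- Complete positivity: all amplifications `id_{M_k} ⊗ Φ` preserve positive
semidefiniteness. -/
def IsCP (Φ : Mat n →ₗ[ℂ] Mat n) : Prop :=
  ∀ (k : ℕ) (X : Mat (Fin k × n)), X.PosSemidef → (ampFun (Fin k) Φ X).PosSemidef

/-- Completely positive and trace preserving. -/
def IsCPTP (Φ : Mat n →ₗ[ℂ] Mat n) : Prop :=
  IsCP Φ ∧ ∀ x : Mat n, (Φ x).trace = x.trace

/-- Scalar multiples of the identity, `ℂ·1`. -/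
def scalarAlg (n : Type*) [Fintype n] [DecidableEq n] : Set (Mat n) :=
  {x : Mat n | ∃ c : ℂ, x = c • (1 : Mat n)}

lemma spec_decomp {σ : Mat n} (hσ : σ.PosSemidef) :
    ∃ (U : Mat n) (q : n → ℝ), (∀ j, 0 ≤ q j) ∧ Uᴴ * U = 1 ∧ U * Uᴴ = 1 ∧
      σ = U * diagonal (fun j => (q j : ℂ)) * Uᴴ ∧
      mlog σ = U * diagonal (fun j => (Real.log (q j) : ℂ)) * Uᴴ := by
  refine ⟨hσ.1.eigenvectorUnitary, hσ.1.eigenvalues, fun j => hσ.eigenvalues_nonneg j, ?_, ?_,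
    ?_, ?_⟩
  · exact Unitary.coe_star_mul_self _
  · exact Unitary.coe_mul_star_self _
  · exact hσ.1.spectral_theorem
  · rw [mlog, hσ.1.cfc_eq]
    rfl

lemma re_trace_formula (V U : Mat n) (a b : n → ℝ) :
    traceR ((V * diagonal (fun j => (a j : ℂ)) * Vᴴ) * (U * diagonal (fun j => (b j : ℂ)) * Uᴴ))
      = ∑ i, ∑ j, a i * b j * Complex.normSq ((Uᴴ * V) j i) := by
  set W := Uᴴ * V with hW
  have h1 : ((V * diagonal (fun j => (a j : ℂ)) * Vᴴ) *
      (U * diagonal (fun j => (b j : ℂ)) * Uᴴ)).trace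
      = (diagonal (fun j => (a j : ℂ)) * (Wᴴ * (diagonal (fun j => (b j : ℂ)) * W))).trace := by
    have : Wᴴ = Vᴴ * U := by simp [hW]
    rw [this, hW, ← Matrix.mul_assoc, Matrix.trace_mul_comm]
    rw [← Matrix.trace_mul_comm]
    simp only [Matrix.mul_assoc]
    rw [Matrix.trace_mul_comm V]
    simp only [Matrix.mul_assoc]
  rw [traceR, h1]
  simp only [trace, diag_apply, diagonal_mul]
  simp only [mul_apply (M := Wᴴ), diagonal_mul, conjTranspose_apply, Complex.re_sum,
    Finset.mul_sum]
  refine Finset.sum_congr rfl fun i _ => Finset.sum_congr rfl fun j _ => ?_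
  have : (a i : ℂ) * (star (W j i) * ((b j : ℂ) * W j i))
      = ((a i * b j * Complex.normSq (W j i) : ℝ) : ℂ) := by
    push_cast
    rw [Complex.normSq_eq_conj_mul_self]
    simp only [Complex.star_def]
    ring
  rw [this, Complex.ofReal_re]

lemma col_sum {W : Mat n} (h : Wᴴ * W = 1) (i : n) : ∑ j, Complex.normSq (W j i) = 1 := by
  have := congrFun (congrFun h i) i
  simp only [mul_apply, conjTranspose_apply, one_apply_eq] at this
  have h2 := congrArg Complex.re this
  simp only [Complex.re_sum, Complex.one_re] at h2
  rw [← h2]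
  refine Finset.sum_congr rfl fun j _ => ?_
  rw [Complex.star_def, ← Complex.normSq_eq_conj_mul_self, Complex.ofReal_re]

lemma log_tangent {x t : ℝ} (hx : 0 < x) (ht : 0 < t) :
    Real.log x ≤ x / t - 1 + Real.log t := by
  have := Real.log_le_sub_one_of_pos (div_pos hx ht)
  rw [Real.log_div hx.ne' ht.ne'] at this
  linarith

lemma Dp_one (ρ σ : Mat n) : Dp 1 ρ σ = DU ρ σ := by simp [Dp]

set_option maxHeartbeats 2000000 in
/-- If `ρ ≤ c σ` then `D(ρ‖σ) ≤ log c`. -/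
lemma DU_le {ρ σ : Mat n} {c : ℝ} (hc : 0 < c) (hρ : IsDensity ρ) (hσ : σ.PosSemidef)
    (h : ((c : ℂ) • σ - ρ).PosSemidef) : DU ρ σ ≤ ((Real.log c : ℝ) : EReal) := by
  have hs : suppLe ρ σ := by
    intro v hv
    have h1 := h.dotProduct_mulVec_nonneg v
    rw [sub_mulVec, smul_mulVec, hv, smul_zero, zero_sub, dotProduct_neg] at h1
    have h2 := hρ.1.dotProduct_mulVec_nonneg v
    exact (hρ.1.dotProduct_mulVec_zero_iff v).1 (le_antisymm (neg_nonneg.1 h1) h2)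
  rw [DU, if_pos hs, EReal.coe_le_coe_iff]
  obtain ⟨U, q, hq, hU1, hU2, hσe, hσl⟩ := spec_decomp hσ
  obtain ⟨V, p, hp, hV1, hV2, hρe, hρl⟩ := spec_decomp hρ.1
  set W := Uᴴ * V with hW
  have hWW : Wᴴ * W = 1 := by
    rw [hW, conjTranspose_mul, conjTranspose_conjTranspose, Matrix.mul_assoc,
      ← Matrix.mul_assoc U, hU2, Matrix.one_mul, hV1]
  have hsum := col_sum hWW
  -- total mass
  have hp1 : ∑ i, p i = 1 := by
    have := hρ.2
    rw [hρe, Matrix.trace_mul_comm, ← Matrix.mul_assoc, hV1, Matrix.one_mul, trace_diagonal] at this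
    exact_mod_cast this
  have e1 : traceR (ρ * mlog ρ) = ∑ i, p i * Real.log (p i) := by
    rw [hρl]
    conv_lhs => rw [hρe]
    rw [re_trace_formula, hV1]
    refine Finset.sum_congr rfl fun i _ => ?_
    rw [Finset.sum_eq_single i]
    · simp
    · intro j _ hj
      simp [one_apply_ne hj]
    · simp
  have e2 : traceR (ρ * mlog σ) =
      ∑ i, ∑ j, p i * Real.log (q j) * Complex.normSq (W j i) := by
    rw [hσl]
    conv_lhs => rw [hρe]
    rw [re_trace_formula]
  have e3 : traceR (ρ * mlog ρ - ρ * mlog σ) = ∑ i, p i *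
      ∑ j, Complex.normSq (W j i) * (Real.log (p i) - Real.log (q j)) := by
    have : traceR (ρ * mlog ρ - ρ * mlog σ) = traceR (ρ * mlog ρ) - traceR (ρ * mlog σ) := by
      simp [traceR]
    rw [this, e1, e2, ← Finset.sum_sub_distrib]
    refine Finset.sum_congr rfl fun i _ => ?_
    have : p i * Real.log (p i) = ∑ j, p i * Real.log (p i) * Complex.normSq (W j i) := by
      rw [← Finset.mul_sum, hsum, mul_one]
    rw [this, ← Finset.sum_sub_distrib, Finset.mul_sum]
    refine Finset.sum_congr rfl fun j _ => ?_
    ring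
  -- conjugated inequality
  have hM : ((c : ℂ) • diagonal (fun j => (q j : ℂ)) -
      W * diagonal (fun j => (p j : ℂ)) * Wᴴ).PosSemidef := by
    have := h.conjTranspose_mul_mul_same U
    convert this using 1
    rw [Matrix.mul_sub, Matrix.sub_mul]
    congr 1
    · rw [hσe, Matrix.mul_smul, Matrix.smul_mul]
      congr 1
      calc diagonal (fun j => (q j : ℂ)) = (Uᴴ * U) * diagonal (fun j => (q j : ℂ)) * (Uᴴ * U) := by
            rw [hU1]; simp
        _ = _ := by simp only [Matrix.mul_assoc]
    · rw [hρe, hW]; simp only [conjTranspose_mul, conjTranspose_conjTranspose, Matrix.mul_assoc]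
  have hzero : ∀ i j, 0 < p i → q j = 0 → Complex.normSq (W j i) = 0 := by
    intro i j hpi hqj
    have hd := hM.diag_nonneg (i := j)
    have : ((c : ℂ) • diagonal (fun j => (q j : ℂ)) -
      W * diagonal (fun j => (p j : ℂ)) * Wᴴ) j j =
        ((c * q j - ∑ k, p k * Complex.normSq (W j k) : ℝ) : ℂ) := by
      rw [Matrix.sub_apply, Matrix.smul_apply, diagonal_apply_eq, Matrix.mul_apply]
      push_cast
      simp only [mul_diagonal, conjTranspose_apply, smul_eq_mul]
      congr 1
      refine Finset.sum_congr rfl fun k _ => ?_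
      rw [Complex.normSq_eq_conj_mul_self, Complex.star_def]
      ring
    rw [this, Complex.zero_le_real, hqj, mul_zero, zero_sub] at hd
    have h0 : ∀ k ∈ Finset.univ, 0 ≤ p k * Complex.normSq (W j k) :=
      fun k _ => mul_nonneg (hp k) (Complex.normSq_nonneg _)
    have h1 := Finset.single_le_sum h0 (Finset.mem_univ i)
    have h2 : p i * Complex.normSq (W j i) ≤ 0 := by linarith
    exact le_antisymm (by nlinarith [Complex.normSq_nonneg (W j i)]) (Complex.normSq_nonneg _)
  have hkey : ∀ i, p i * ∑ j, (q j)⁻¹ * Complex.normSq (W j i) ≤ c := by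
    intro i
    set s := ∑ j, (q j)⁻¹ * Complex.normSq (W j i) with hs
    have hs0 : 0 ≤ s := Finset.sum_nonneg fun j _ =>
      mul_nonneg (inv_nonneg.2 (hq j)) (Complex.normSq_nonneg _)
    set R := diagonal (fun j => (((q j)⁻¹ : ℝ) : ℂ)) with hR
    have hRH : Rᴴ = R := by
      rw [hR, diagonal_conjTranspose]
      congr 1
      ext j
      simp
    set S := Wᴴ * R * W with hS
    have hSH : Sᴴ = S := by
      rw [hS]; simp only [conjTranspose_mul, conjTranspose_conjTranspose, hRH, Matrix.mul_assoc]
    have hRQR : R * diagonal (fun j => (q j : ℂ)) * R = R := by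
      rw [hR, diagonal_mul_diagonal, diagonal_mul_diagonal]
      congr 1
      ext j
      by_cases hqj : q j = 0
      · simp [hqj]
      · have : (q j : ℂ) ≠ 0 := by exact_mod_cast hqj
        push_cast
        field_simp
    have hPS := hM.conjTranspose_mul_mul_same (R * W)
    have hEq : (R * W)ᴴ * ((c : ℂ) • diagonal (fun j => (q j : ℂ)) -
      W * diagonal (fun j => (p j : ℂ)) * Wᴴ) * (R * W) =
        (c : ℂ) • S - S * diagonal (fun j => (p j : ℂ)) * S := by
      rw [Matrix.mul_sub, Matrix.sub_mul, Matrix.mul_smul, Matrix.smul_mul]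
      congr 1
      · congr 1
        rw [conjTranspose_mul, hRH, hS]
        conv_rhs => rw [← hRQR]
        simp only [Matrix.mul_assoc]
      · rw [conjTranspose_mul, hRH, hS]
        simp only [Matrix.mul_assoc]
    rw [hEq] at hPS
    have hd := hPS.diag_nonneg (i := i)
    have hSii : S i i = (s : ℂ) := by
      rw [hS, Matrix.mul_apply, hs]
      push_cast
      refine Finset.sum_congr rfl fun k _ => ?_
      rw [hR, mul_diagonal, conjTranspose_apply, Complex.normSq_eq_conj_mul_self, Complex.star_def]
      push_cast
      ring
    have : ((c : ℂ) • S - S * diagonal (fun j => (p j : ℂ)) * S) i i =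
        ((c * s - ∑ k, p k * Complex.normSq (S k i) : ℝ) : ℂ) := by
      rw [Matrix.sub_apply, Matrix.smul_apply, Matrix.mul_apply, hSii]
      push_cast
      simp only [mul_diagonal, smul_eq_mul]
      congr 1
      refine Finset.sum_congr rfl fun k _ => ?_
      rw [Complex.normSq_eq_conj_mul_self]
      have : S i k = (starRingEnd ℂ) (S k i) := by
        conv_lhs => rw [← hSH]
        rfl
      rw [this]
      ring
    rw [this, Complex.zero_le_real] at hd
    have h0 : ∀ k ∈ Finset.univ, 0 ≤ p k * Complex.normSq (S k i) :=
      fun k _ => mul_nonneg (hp k) (Complex.normSq_nonneg _)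
    have h1 := Finset.single_le_sum h0 (Finset.mem_univ i)
    rw [hSii, Complex.normSq_ofReal] at h1
    rcases hs0.eq_or_lt with h | h
    · rw [← h]; simpa using hc.le
    · have : s * (p i * s) ≤ s * c := by nlinarith
      exact le_of_mul_le_mul_left this h
  rw [e3]
  have : Real.log c = ∑ i, p i * Real.log c := by rw [← Finset.sum_mul, hp1, one_mul]
  rw [this]
  refine Finset.sum_le_sum fun i _ => ?_
  rcases (hp i).eq_or_lt with h0 | h0
  · simp [← h0]
  refine mul_le_mul_of_nonneg_left ?_ (hp i)
  calc ∑ j, Complex.normSq (W j i) * (Real.log (p i) - Real.log (q j))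
      ≤ ∑ j, (p i / c * ((q j)⁻¹ * Complex.normSq (W j i)) +
          (Real.log c - 1) * Complex.normSq (W j i)) := by
        refine Finset.sum_le_sum fun j _ => ?_
        rcases (hq j).eq_or_lt with h1 | h1
        · simp [hzero i j h0 h1.symm]
        · have ht := log_tangent (div_pos h0 h1) hc
          rw [Real.log_div h0.ne' h1.ne'] at ht
          have := mul_le_mul_of_nonneg_left ht (Complex.normSq_nonneg (W j i))
          refine this.trans (le_of_eq ?_)
          field_simp
          ring
    _ = p i / c * ∑ j, (q j)⁻¹ * Complex.normSq (W j i) + (Real.log c - 1) := by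
        rw [Finset.sum_add_distrib, ← Finset.mul_sum, ← Finset.mul_sum, hsum, mul_one]
    _ ≤ Real.log c := by
        have : p i / c * ∑ j, (q j)⁻¹ * Complex.normSq (W j i) ≤ 1 := by
          rw [div_mul_eq_mul_div, div_le_one hc]
          exact hkey i
        linarith

/-- For a pure state `ρ` with `Tr(ρσ) ≤ 1/c` we have `D(ρ‖σ) ≥ log c`. -/
lemma le_DU {ρ σ : Mat n} {c : ℝ} (hc : 0 < c) (hρ : IsDensity ρ) (hpure : ρ * ρ = ρ)
    (hσ : σ.PosSemidef) (h : traceR (ρ * σ) ≤ 1 / c) : ((Real.log c : ℝ) : EReal) ≤ DU ρ σ := by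
  by_cases hs : suppLe ρ σ
  swap
  · rw [DU, if_neg hs]; exact le_top
  rw [DU, if_pos hs, EReal.coe_le_coe_iff]
  have hl : mlog ρ = 0 := by
    rw [mlog]
    have : cfc Real.log ρ = cfc (fun _ : ℝ => (0 : ℝ)) ρ := by
      refine cfc_congr fun x hx => ?_
      have hx' := IsIdempotentElem.spectrum_subset ℝ (p := ρ) hpure hx
      rcases hx' with rfl | hx'
      · simp
      · rw [Set.mem_singleton_iff.1 hx']; simp
    rw [this, cfc_const_zero]
  rw [hl, mul_zero, zero_sub]
  obtain ⟨U, q, hq, hU1, hU2, hσe, hσl⟩ := spec_decomp hσ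
  have hB : (Uᴴ * ρ * U).PosSemidef := hρ.1.conjTranspose_mul_mul_same U
  set w : n → ℝ := fun j => ((Uᴴ * ρ * U) j j).re with hw
  have hw0 : ∀ j, 0 ≤ w j := fun j => (Complex.nonneg_iff.1 (hB.diag_nonneg (i := j))).1
  have hf : ∀ a : n → ℝ, traceR (ρ * (U * diagonal (fun j => (a j : ℂ)) * Uᴴ)) =
      ∑ j, w j * a j := by
    intro a
    rw [traceR, ← Matrix.mul_assoc, Matrix.trace_mul_comm, ← Matrix.mul_assoc, ← Matrix.mul_assoc]
    simp only [trace, diag_apply, mul_diagonal, Complex.re_sum]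
    refine Finset.sum_congr rfl fun j _ => ?_
    rw [Complex.re_mul_ofReal]
  have hw1 : ∑ j, w j = 1 := by
    have := hf (fun _ => 1)
    simp only [mul_one, Complex.ofReal_one] at this
    rw [← this, diagonal_one, mul_one, hU2, mul_one, traceR, hρ.2, Complex.one_re]
  have hqw : ∑ j, w j * q j ≤ 1 / c := by rw [← hf, ← hσe]; exact h
  have hzero : ∀ j, q j = 0 → w j = 0 := by
    intro j hj
    have h1 : σ.mulVec (fun k => U k j) = 0 := by
      have : σ * U = U * diagonal (fun j => (q j : ℂ)) := by
        rw [hσe, Matrix.mul_assoc, hU1, Matrix.mul_one]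
      ext k
      have h2 := congrFun (congrFun this k) j
      rw [mul_diagonal, hj, Complex.ofReal_zero, mul_zero, Matrix.mul_apply] at h2
      exact h2
    have h2 := hs _ h1
    have h3 : (Uᴴ * ρ * U) j j = 0 := by
      rw [Matrix.mul_assoc, Matrix.mul_apply]
      refine Finset.sum_eq_zero fun k _ => ?_
      have : (ρ * U) k j = 0 := congrFun h2 k
      rw [this, mul_zero]
    rw [hw]; simp [h3]
  have : traceR (-(ρ * mlog σ)) = - traceR (ρ * mlog σ) := by simp [traceR]
  rw [this, hσl, hf]
  have hc' : 0 < 1 / c := by positivity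
  have hfin : ∑ j, w j * Real.log (q j) ≤ ∑ j, (c * (w j * q j) + (-1 - Real.log c) * w j) := by
    refine Finset.sum_le_sum fun j _ => ?_
    rcases (hq j).eq_or_lt with h1 | h1
    · simp [hzero j h1.symm]
    · have ht := log_tangent h1 hc'
      rw [one_div, Real.log_inv, div_inv_eq_mul] at ht
      have := mul_le_mul_of_nonneg_left ht (hw0 j)
      refine this.trans (le_of_eq ?_)
      ring
  rw [Finset.sum_add_distrib, ← Finset.mul_sum, ← Finset.mul_sum, hw1] at hfin
  have : c * ∑ j, w j * q j ≤ 1 := by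
    rw [le_div_iff₀ hc] at hqw
    linarith
  linarith

lemma DpRel_le {S : Set (Mat n)} {c : ℝ} (hc : 0 < c)
    (h : ∀ ρ : Mat n, IsDensity ρ → ∃ σ ∈ S, IsDensity σ ∧ ((c : ℂ) • σ - ρ).PosSemidef) :
    DpRel 1 Set.univ S ≤ ((Real.log c : ℝ) : EReal) := by
  refine iSup₂_le fun ρ hρ => ?_
  obtain ⟨σ, hσS, hσ, hle⟩ := h ρ hρ.2
  refine (iInf₂_le σ ⟨hσS, hσ⟩).trans ?_
  rw [Dp_one]
  exact DU_le hc hρ.2 hσ.1 hle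

lemma le_DpRel {S : Set (Mat n)} {c k : ℝ} (hc : 0 < c) (hk : 0 < k) (f : n → ℂ)
    (hf : star f = f) (hfk : f ⬝ᵥ f = (k : ℂ))
    (h : ∀ σ ∈ S, IsDensity σ → (f ⬝ᵥ (σ *ᵥ f)).re ≤ k / c) :
    ((Real.log c : ℝ) : EReal) ≤ DpRel 1 Set.univ S := by
  set ρ : Mat n := ((k⁻¹ : ℝ) : ℂ) • vecMulVec f f with hρdef
  have hk' : (k : ℂ) ≠ 0 := by exact_mod_cast hk.ne'
  have hρ : IsDensity ρ := by
    constructor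
    · have := posSemidef_vecMulVec_self_star f
      rw [hf] at this
      exact this.smul (by rw [Complex.zero_le_real]; positivity)
    · rw [hρdef, trace_smul, trace_vecMulVec, hfk, smul_eq_mul]
      push_cast
      field_simp
  have hpure : ρ * ρ = ρ := by
    rw [hρdef, Matrix.smul_mul, Matrix.mul_smul, vecMulVec_mul_vecMulVec, hfk, smul_smul]
    ext i j
    simp only [Matrix.smul_apply, vecMulVec_apply, Pi.smul_apply, smul_eq_mul]
    push_cast
    field_simp
  refine le_trans ?_ (le_iSup₂ (f := fun ρ (_ : ρ ∈ {ρ ∈ (Set.univ : Set (Mat n)) | IsDensity ρ}) =>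
    DpSet 1 ρ S) ρ ⟨Set.mem_univ _, hρ⟩)
  refine le_iInf₂ fun σ hσ => ?_
  rw [Dp_one]
  refine le_DU hc hρ hpure hσ.2.1 ?_
  have h1 := h σ hσ.1 hσ.2
  have : (ρ * σ).trace = ((k⁻¹ : ℝ) : ℂ) * (f ⬝ᵥ (σ *ᵥ f)) := by
    rw [hρdef, Matrix.smul_mul, trace_smul, Matrix.trace_mul_comm, mul_vecMulVec, trace_vecMulVec,
      smul_eq_mul, dotProduct_comm]
  rw [traceR, this, Complex.re_ofReal_mul]
  calc k⁻¹ * (f ⬝ᵥ (σ *ᵥ f)).re ≤ k⁻¹ * (k / c) :=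
        mul_le_mul_of_nonneg_left h1 (by positivity)
    _ = 1 / c := by field_simp

/-- `ρ ≤ Tr(ρ) 1`. -/
lemma density_le_one {ρ : Mat n} (hρ : IsDensity ρ) : (1 - ρ).PosSemidef := by
  obtain ⟨V, p, hp, hV1, hV2, hρe, hρl⟩ := spec_decomp hρ.1
  have hp1 : ∑ i, p i = 1 := by
    have := hρ.2
    rw [hρe, Matrix.trace_mul_comm, ← Matrix.mul_assoc, hV1, Matrix.one_mul, trace_diagonal] at this
    exact_mod_cast this
  have : 1 - ρ = V * diagonal (fun j => ((1 - p j : ℝ) : ℂ)) * Vᴴ := by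
    have : diagonal (fun j => ((1 - p j : ℝ) : ℂ)) = 1 - diagonal (fun j => (p j : ℂ)) := by
      rw [← diagonal_one, diagonal_sub]
      congr 1
      ext j
      push_cast
      rfl
    rw [this, Matrix.mul_sub, Matrix.sub_mul, ← hρe, Matrix.mul_one, hV2]
  rw [this]
  refine PosSemidef.mul_mul_conjTranspose_same ?_ V
  refine PosSemidef.diagonal fun j => ?_
  simp only [Pi.zero_apply, Complex.zero_le_real]
  have := Finset.single_le_sum (fun k _ => hp k) (Finset.mem_univ j)
  linarith

lemma DpRel_le_card {S : Set (Mat n)} {c : ℝ} (hc : 0 < c) (hcard : (Fintype.card n : ℝ) = c)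
    (hS : ((c⁻¹ : ℝ) : ℂ) • (1 : Mat n) ∈ S) :
    DpRel 1 Set.univ S ≤ ((Real.log c : ℝ) : EReal) := by
  have hc' : (c : ℂ) ≠ 0 := by exact_mod_cast hc.ne'
  refine DpRel_le hc fun ρ hρ => ⟨_, hS, ⟨?_, ?_⟩, ?_⟩
  · exact PosSemidef.one.smul (by rw [Complex.zero_le_real]; positivity)
  · rw [trace_smul, trace_one, smul_eq_mul]
    have : (Fintype.card n : ℂ) = (c : ℂ) := by exact_mod_cast congrArg (fun x : ℝ => (x : ℂ)) hcard
    rw [this]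
    push_cast
    field_simp
  · rw [smul_smul]
    have : (c : ℂ) * ((c⁻¹ : ℝ) : ℂ) = 1 := by push_cast; field_simp
    rw [this, one_smul]
    exact density_le_one hρ

open scoped Kronecker in
lemma mem_left {m₁ m₂ : Type*} [Fintype m₁] [DecidableEq m₁] [Fintype m₂] [DecidableEq m₂]
    {z : Mat (m₁ × m₂)} (hz : z ∈ tensorSpan (Set.univ : Set (Mat m₁)) (scalarAlg m₂)) :
    ∃ a : Mat m₁, z = a ⊗ₖ (1 : Mat m₂) := by
  refine Submodule.span_induction (p := fun z _ => ∃ a : Mat m₁, z = a ⊗ₖ (1 : Mat m₂))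
    ?_ ?_ ?_ ?_ hz
  · rintro _ ⟨x, -, y, ⟨c, rfl⟩, rfl⟩
    exact ⟨c • x, by rw [kronecker_smul, smul_kronecker]⟩
  · exact ⟨0, by rw [zero_kronecker]⟩
  · rintro _ _ _ _ ⟨a, rfl⟩ ⟨b, rfl⟩
    exact ⟨a + b, by rw [add_kronecker]⟩
  · rintro c _ _ ⟨a, rfl⟩
    exact ⟨c • a, by rw [smul_kronecker]⟩

open scoped Kronecker in
lemma mem_right {m₁ m₂ : Type*} [Fintype m₁] [DecidableEq m₁] [Fintype m₂] [DecidableEq m₂]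
    {z : Mat (m₁ × m₂)} (hz : z ∈ tensorSpan (scalarAlg m₁) (Set.univ : Set (Mat m₂))) :
    ∃ a : Mat m₂, z = (1 : Mat m₁) ⊗ₖ a := by
  refine Submodule.span_induction (p := fun z _ => ∃ a : Mat m₂, z = (1 : Mat m₁) ⊗ₖ a)
    ?_ ?_ ?_ ?_ hz
  · rintro _ ⟨x, ⟨c, rfl⟩, y, -, rfl⟩
    exact ⟨c • y, by rw [kronecker_smul, smul_kronecker]⟩
  · exact ⟨0, by rw [kronecker_zero]⟩
  · rintro _ _ _ _ ⟨a, rfl⟩ ⟨b, rfl⟩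
    exact ⟨a + b, by rw [kronecker_add]⟩
  · rintro c _ _ ⟨a, rfl⟩
    exact ⟨c • a, by rw [kronecker_smul]⟩

open scoped Kronecker in
lemma tmul_mem {m₁ m₂ : Type*} [Fintype m₁] [DecidableEq m₁] [Fintype m₂] [DecidableEq m₂]
    {A : Set (Mat m₁)} {B : Set (Mat m₂)} {x : Mat m₁} {y : Mat m₂} (hx : x ∈ A) (hy : y ∈ B)
    (c : ℂ) : c • (x ⊗ₖ y) ∈ tensorSpan A B :=
  Submodule.smul_mem _ _ (Submodule.subset_span ⟨x, hx, y, hy, rfl⟩)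

lemma one_mem_tensor {m₁ m₂ : Type*} [Fintype m₁] [DecidableEq m₁] [Fintype m₂] [DecidableEq m₂]
    {A : Set (Mat m₁)} {B : Set (Mat m₂)} (hx : 1 ∈ A) (hy : 1 ∈ B)
    (c : ℂ) : c • (1 : Mat (m₁ × m₂)) ∈ tensorSpan A B := by
  have := tmul_mem hx hy c
  rwa [one_kronecker_one] at this

lemma one_mem_scalar : (1 : Mat n) ∈ scalarAlg n := ⟨1, by rw [one_smul]⟩

/-- The three nontrivial Pauli conjugations. -/
def pauliTensor (P : Mat (Fin 2)) : Mat (Fin 2 × Fin 3) :=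
  Matrix.kroneckerMap (· * ·) P (1 : Mat (Fin 3))

/-- partial trace over the first factor. -/
def ptr (ρ : Mat (Fin 2 × Fin 3)) : Mat (Fin 3) :=
  Matrix.of fun s t => ρ (0, s) (0, t) + ρ (1, s) (1, t)

open scoped Kronecker in
lemma pauli_sum (ρ : Mat (Fin 2 × Fin 3)) :
    (2 : ℂ) • ((1 : Mat (Fin 2)) ⊗ₖ ptr ρ) - ρ =
      pauliTensor !![0, 1; 1, 0] * ρ * (pauliTensor !![0, 1; 1, 0])ᴴ +
      pauliTensor !![0, -Complex.I; Complex.I, 0] * ρ *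
        (pauliTensor !![0, -Complex.I; Complex.I, 0])ᴴ +
      pauliTensor !![1, 0; 0, -1] * ρ * (pauliTensor !![1, 0; 0, -1])ᴴ := by
  ext ⟨i, s⟩ ⟨j, t⟩
  have key : ∀ P : Mat (Fin 2), (pauliTensor P * ρ * (pauliTensor P)ᴴ) (i, s) (j, t) =
      ∑ a, ∑ b, P i a * ρ (a, s) (b, t) * star (P j b) := by
    intro P
    simp only [pauliTensor, Matrix.mul_apply, Fintype.sum_prod_type, kroneckerMap_apply,
      conjTranspose_apply, Matrix.one_apply]
    simp [Finset.sum_mul, Fin.sum_univ_two, apply_ite, ite_mul, mul_ite]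
    ring
  simp only [Matrix.add_apply, key, Matrix.sub_apply, Matrix.smul_apply, kroneckerMap_apply, ptr,
    Matrix.of_apply, Fin.sum_univ_two]
  fin_cases i <;> fin_cases j <;> simp [Matrix.one_apply] <;> ring_nf <;> simp <;> ring

/-- for `M₂ ⊗ ℂ1₃ ⊆ M₆` and `ℂ1₂ ⊗ M₃ ⊆ M₆` (with
`M₆ ≅ M₂ ⊗ M₃`) one has `D(M₆‖M₂ ⊗ ℂ1₃) = log 6`, `D(M₆‖ℂ1₂ ⊗ M₃) = log 4`,
while `D(M₆ ⊗ M₆ ‖ (M₂ ⊗ ℂ1₃) ⊗ (ℂ1₂ ⊗ M₃)) = log 36`; thus superadditivity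
of the relative entropy to a subalgebra can be strict. -/
theorem statement10 :
    DpRel 1 Set.univ
        (tensorSpan (Set.univ : Set (Mat (Fin 2))) (scalarAlg (Fin 3)))
      = ((Real.log 6 : ℝ) : EReal) ∧
    DpRel 1 Set.univ
        (tensorSpan (scalarAlg (Fin 2)) (Set.univ : Set (Mat (Fin 3))))
      = ((Real.log 4 : ℝ) : EReal) ∧
    DpRel 1 Set.univ
        (tensorSpan
          (tensorSpan (Set.univ : Set (Mat (Fin 2))) (scalarAlg (Fin 3)))
          (tensorSpan (scalarAlg (Fin 2)) (Set.univ : Set (Mat (Fin 3)))))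
      = ((Real.log 36 : ℝ) : EReal) ∧
    ((Real.log 36 : ℝ) : EReal) >
      ((Real.log 6 : ℝ) : EReal) + ((Real.log 4 : ℝ) : EReal) := by
  have h6 : ((Fintype.card (Fin 2 × Fin 3) : ℕ) : ℝ) = 6 := by simp
  have h36 : ((Fintype.card ((Fin 2 × Fin 3) × (Fin 2 × Fin 3)) : ℕ) : ℝ) = 36 := by
    simp
  refine ⟨le_antisymm ?_ ?_, le_antisymm ?_ ?_, le_antisymm ?_ ?_, ?_⟩
  · exact DpRel_le_card (by norm_num) h6 (one_mem_tensor (Set.mem_univ _) one_mem_scalar _)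
  · refine le_DpRel (k := 2) (by norm_num) (by norm_num)
      (fun p => if p.1.val = p.2.val then 1 else 0) ?_ ?_ ?_
    · ext p
      simp only [Pi.star_apply]
      split_ifs <;> simp
    · simp [dotProduct, Fintype.sum_prod_type, Fin.sum_univ_succ]
      norm_num
    · intro σ hσ hd
      obtain ⟨a, rfl⟩ := mem_left hσ
      have ht := hd.2
      rw [trace_kronecker, trace_one] at ht
      simp [trace, Fin.sum_univ_succ] at ht
      have e : a 0 0 + a 1 1 = 1 / 3 := by linear_combination ht / 3
      have : ((fun p : Fin 2 × Fin 3 => if p.1.val = p.2.val then (1 : ℂ) else 0) ⬝ᵥ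
          ((kroneckerMap (· * ·) a (1 : Mat (Fin 3))) *ᵥ
            (fun p : Fin 2 × Fin 3 => if p.1.val = p.2.val then (1 : ℂ) else 0))) =
          a 0 0 + a 1 1 := by
        simp [dotProduct, mulVec, Fintype.sum_prod_type, Fin.sum_univ_succ, Matrix.one_apply]
      rw [this, e]
      norm_num
  · refine DpRel_le (by norm_num) fun ρ hρ =>
      ⟨(1 / 2 : ℂ) • (kroneckerMap (· * ·) (1 : Mat (Fin 2)) (ptr ρ)),
        tmul_mem one_mem_scalar (Set.mem_univ _) _, ⟨?_, ?_⟩, ?_⟩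
    · have h1 : (ptr ρ).PosSemidef := by
        have : ptr ρ = ρ.submatrix (fun s => ((0 : Fin 2), s)) (fun s => ((0 : Fin 2), s)) +
            ρ.submatrix (fun s => ((1 : Fin 2), s)) (fun s => ((1 : Fin 2), s)) := by
          ext s t; rfl
        rw [this]
        exact (hρ.1.submatrix _).add (hρ.1.submatrix _)
      refine (PosSemidef.one.kronecker h1).smul ?_
      rw [show (1 / 2 : ℂ) = ((1 / 2 : ℝ) : ℂ) by push_cast; rfl, Complex.zero_le_real]
      norm_num
    · rw [trace_smul, trace_kronecker, trace_one]
      have := hρ.2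
      simp [trace, Fintype.sum_prod_type, Fin.sum_univ_succ] at this
      simp [trace, Fin.sum_univ_succ, ptr]
      linear_combination this
    · rw [smul_smul]
      have : ((4 : ℝ) : ℂ) * (1 / 2) = 2 := by push_cast; norm_num
      rw [this, pauli_sum]
      exact ((hρ.1.mul_mul_conjTranspose_same _).add (hρ.1.mul_mul_conjTranspose_same _)).add
        (hρ.1.mul_mul_conjTranspose_same _)
  · refine le_DpRel (k := 2) (by norm_num) (by norm_num)
      (fun p => if p.1.val = p.2.val then 1 else 0) ?_ ?_ ?_
    · ext p
      simp only [Pi.star_apply]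
      split_ifs <;> simp
    · simp [dotProduct, Fintype.sum_prod_type, Fin.sum_univ_succ]
      norm_num
    · intro σ hσ hd
      obtain ⟨a, rfl⟩ := mem_right hσ
      have ht := hd.2
      have hpos := hd.1.diag_nonneg (i := (0, 2))
      rw [trace_kronecker, trace_one] at ht
      simp [trace, Fin.sum_univ_succ] at ht
      simp at hpos
      have e : a 0 0 + a 1 1 = 1 / 2 - a 2 2 := by linear_combination ht / 2
      have hp := (Complex.nonneg_iff.1 hpos).1
      have : ((fun p : Fin 2 × Fin 3 => if p.1.val = p.2.val then (1 : ℂ) else 0) ⬝ᵥ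
          ((kroneckerMap (· * ·) (1 : Mat (Fin 2)) a) *ᵥ
            (fun p : Fin 2 × Fin 3 => if p.1.val = p.2.val then (1 : ℂ) else 0))) =
          a 0 0 + a 1 1 := by
        simp [dotProduct, mulVec, Fintype.sum_prod_type, Fin.sum_univ_succ, Matrix.one_apply]
      rw [this, e]
      norm_num
      exact hp
  · exact DpRel_le_card (by norm_num) h36 (one_mem_tensor
      (by simpa using one_mem_tensor (Set.mem_univ (1 : Mat (Fin 2))) (one_mem_scalar (n := Fin 3)) 1)
      (by simpa using one_mem_tensor (one_mem_scalar (n := Fin 2)) (Set.mem_univ (1 : Mat (Fin 3))) 1)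
      _)
  · refine le_DpRel (k := 6) (by norm_num) (by norm_num)
      (fun p => if p.1 = p.2 then 1 else 0) ?_ ?_ ?_
    · ext p
      simp only [Pi.star_apply]
      split_ifs <;> simp
    · simp [dotProduct, Fintype.sum_prod_type (α₁ := Fin 2 × Fin 3)]
    · intro σ hσ hd
      have key : ((fun p : (Fin 2 × Fin 3) × (Fin 2 × Fin 3) =>
          if p.1 = p.2 then (1 : ℂ) else 0) ⬝ᵥ
          (σ *ᵥ (fun p => if p.1 = p.2 then (1 : ℂ) else 0))) = 1 / 6 * σ.trace := by
        refine Submodule.span_induction (p := fun σ _ =>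
          ((fun p : (Fin 2 × Fin 3) × (Fin 2 × Fin 3) =>
          if p.1 = p.2 then (1 : ℂ) else 0) ⬝ᵥ
          (σ *ᵥ (fun p => if p.1 = p.2 then (1 : ℂ) else 0))) = 1 / 6 * σ.trace)
          ?_ ?_ ?_ ?_ hσ
        · rintro _ ⟨x, hx, y, hy, rfl⟩
          obtain ⟨a, rfl⟩ := mem_left hx
          obtain ⟨b, rfl⟩ := mem_right hy
          rw [trace_kronecker, trace_kronecker, trace_kronecker, trace_one, trace_one]
          have : ∀ X Y : Mat (Fin 2 × Fin 3), ((fun p : (Fin 2 × Fin 3) × (Fin 2 × Fin 3) =>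
            if p.1 = p.2 then (1 : ℂ) else 0) ⬝ᵥ ((kroneckerMap (· * ·) X Y) *ᵥ
              (fun p => if p.1 = p.2 then (1 : ℂ) else 0))) = ∑ p, ∑ q, X p q * Y p q := by
            intro X Y
            simp [dotProduct, mulVec, Fintype.sum_prod_type (α₁ := Fin 2 × Fin 3)]
          rw [this]
          simp [Fintype.sum_prod_type, Fin.sum_univ_succ, Matrix.one_apply, trace]
          ring
        · simp
        · intro x y _ _ h1 h2
          rw [add_mulVec, dotProduct_add, h1, h2, trace_add, mul_add]
        · intro c x _ h1
          rw [smul_mulVec, dotProduct_smul, h1, trace_smul, smul_eq_mul, smul_eq_mul]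
          ring
      rw [key, hd.2]
      norm_num
  · rw [← EReal.coe_add, gt_iff_lt, EReal.coe_lt_coe_iff,
      ← Real.log_mul (by norm_num) (by norm_num)]
    exact Real.log_lt_log (by norm_num) (by norm_num)

end GJL
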